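/- Let h̃ be a metric on a nonempty open set U ⊆ ℝ^n and let E be a smooth vector field on U with L_E h̃ = D̃·h̃ for a smooth function D̃. Then for all vector fields X, Y on U the following identity of 1-forms holds: h̃((∇^{h̃}_Y(∇^{h̃}E))(X)) = h̃(R(h̃)_{Y,E}X) + (1/2)[−h̃(X,Y)·dD̃ + Y(D̃)·h̃(X) + X(D̃)·h̃(Y)], where ∇^{h̃}E is the (1,1)-tensor X ↦ ∇^{h̃}_X E and (∇^{h̃}_Y(∇^{h̃}E))(X) := ∇^{h̃}_Y(∇^{h̃}_X E) − ∇^{h̃}_{∇^{h̃}_Y X} E. -/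

import Mathlib

open scoped BigOperators

noncomputable section

/-- Points of ℝⁿ. -/
abbrev Pt (n : ℕ) := Fin n → ℝ
/-- Vector fields (globally defined functions; conditions are imposed on an open set). -/
abbrev VF (n : ℕ) := Pt n → Fin n → ℝ
/-- 1-forms. -/
abbrev OneForm (n : ℕ) := Pt n → Fin n → ℝ
/-- Metrics: smooth maps into symmetric invertible matrices. -/
abbrev Met (n : ℕ) := Pt n → Matrix (Fin n) (Fin n) ℝ
/-- (1,2)-tensor fields (multiplications on tangent vectors): components `c t k i j` = c^k_{ij}(t). -/
abbrev Mul2 (n : ℕ) := Pt n → Fin n → Fin n → Fin n → ℝ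

variable {n : ℕ}

/-- Partial derivative ∂ᵢ f (t). -/
def pder (i : Fin n) (f : Pt n → ℝ) (t : Pt n) : ℝ :=
  fderiv ℝ f t (Pi.single i 1)

/-- Smoothness (on `U`) of a vector field or a 1-form. -/
def SmoothVF (U : Set (Pt n)) (X : VF n) : Prop :=
  ∀ k, ContDiffOn ℝ (⊤ : ℕ∞) (fun t => X t k) U

def SmoothMet (U : Set (Pt n)) (g : Met n) : Prop :=
  ∀ i j, ContDiffOn ℝ (⊤ : ℕ∞) (fun t => g t i j) U

def SmoothMul2 (U : Set (Pt n)) (c : Mul2 n) : Prop :=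
  ∀ k i j, ContDiffOn ℝ (⊤ : ℕ∞) (fun t => c t k i j) U

/-- `g` is a (pseudo-Riemannian) metric on `U`: smooth, symmetric, invertible. -/
def IsMetricOn (U : Set (Pt n)) (g : Met n) : Prop :=
  SmoothMet U g ∧ ∀ t ∈ U, (g t).IsSymm ∧ IsUnit (g t)

/-- The 1-form g(X). -/
def mdown (g : Met n) (X : VF n) : OneForm n := fun t k => ∑ j, g t k j * X t j
/-- The vector field g*α. -/
def mup (g : Met n) (α : OneForm n) : VF n := fun t k => ∑ j, (g t)⁻¹ k j * α t j
/-- g*(α, β). -/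
def mup2 (g : Met n) (α β : OneForm n) (t : Pt n) : ℝ :=
  ∑ i, ∑ j, (g t)⁻¹ i j * α t i * β t j
/-- g(X, Y). -/
def mdown2 (g : Met n) (X Y : VF n) (t : Pt n) : ℝ :=
  ∑ i, ∑ j, g t i j * X t i * Y t j

/-- Christoffel symbols Γ(g)^k_{ij}(t). -/
def chr (g : Met n) (k i j : Fin n) (t : Pt n) : ℝ :=
  (1/2) * ∑ l, (g t)⁻¹ k l *
    (pder i (fun s => g s j l) t + pder j (fun s => g s i l) t - pder l (fun s => g s i j) t)

/-- Levi-Civita covariant derivative ∇^g_X Y of a vector field. -/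
def covV (g : Met n) (X Y : VF n) : VF n :=
  fun t k => ∑ i, X t i * (pder i (fun s => Y s k) t + ∑ m, chr g k i m t * Y t m)

/-- Levi-Civita covariant derivative ∇^g_X α of a 1-form. -/
def covF (g : Met n) (X : VF n) (α : OneForm n) : OneForm n :=
  fun t k => ∑ i, X t i * (pder i (fun s => α s k) t - ∑ m, chr g m i k t * α t m)

/-- Lie bracket [X, Y]. -/
def vbr (X Y : VF n) : VF n :=
  fun t k => ∑ i, (X t i * pder i (fun s => Y s k) t - Y t i * pder i (fun s => X s k) t)

/-- Curvature R(g)_{X,Y} Z = ∇_X ∇_Y Z − ∇_Y ∇_X Z − ∇_{[X,Y]} Z. -/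
def curvV (g : Met n) (X Y Z : VF n) : VF n :=
  fun t k => covV g X (covV g Y Z) t k - covV g Y (covV g X Z) t k
    - covV g (vbr X Y) Z t k

/-- Curvature acting on 1-forms: (R(g)_{X,Y} α)(Z) = −α(R(g)_{X,Y} Z). -/
def curvF (g : Met n) (X Y : VF n) (α : OneForm n) : OneForm n :=
  fun t k => - ∑ m, α t m * curvV g X Y (fun _ => Pi.single k 1) t m

/-- `g` is flat on `U`: the curvature tensor vanishes identically. -/
def FlatOn (U : Set (Pt n)) (g : Met n) : Prop :=
  ∀ X Y Z : VF n, SmoothVF U X → SmoothVF U Y → SmoothVF U Z →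
    ∀ t ∈ U, ∀ k, curvV g X Y Z t k = 0

/-- `g` has constant sectional curvature `s` on `U`. -/
def ConstSecCurv (U : Set (Pt n)) (g : Met n) (s : ℝ) : Prop :=
  ∀ X Y : VF n, SmoothVF U X → SmoothVF U Y → ∀ t ∈ U,
    mdown2 g (curvV g X Y Y) X t
      = s * (mdown2 g X X t * mdown2 g Y Y t - (mdown2 g X Y t) ^ 2)

/-- The metric g_λ of the pencil: its inverse matrix is g⁻¹ + λ g̃⁻¹. -/
def pencil (g g' : Met n) (lam : ℝ) : Met n :=
  fun t => ((g t)⁻¹ + lam • (g' t)⁻¹)⁻¹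

/-- Almost compatibility of the pair (g, g̃) on `U`. -/
def AlmostCompatible (U : Set (Pt n)) (g g' : Met n) : Prop :=
  ∀ lam : ℝ, (∀ t ∈ U, IsUnit ((g t)⁻¹ + lam • (g' t)⁻¹)) →
    ∀ X : VF n, SmoothVF U X → ∀ α : OneForm n, SmoothVF U α →
      ∀ t ∈ U, ∀ k,
        mup (pencil g g' lam) (covF (pencil g g' lam) X α) t k
          = mup g (covF g X α) t k + lam * mup g' (covF g' X α) t k

/-- Compatibility of the pair (g, g̃) on `U`. -/
def Compatible (U : Set (Pt n)) (g g' : Met n) : Prop :=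
  AlmostCompatible U g g' ∧
  ∀ lam : ℝ, (∀ t ∈ U, IsUnit ((g t)⁻¹ + lam • (g' t)⁻¹)) →
    ∀ X Y : VF n, SmoothVF U X → SmoothVF U Y →
      ∀ α : OneForm n, SmoothVF U α →
        ∀ t ∈ U, ∀ k,
          mup (pencil g g' lam) (curvF (pencil g g' lam) X Y α) t k
            = mup g (curvF g X Y α) t k + lam * mup g' (curvF g' X Y α) t k

/-- The multiplication α ∘ β = ∇^g_{g*α} β − ∇^{g̃}_{g*α} β on 1-forms. -/
def circM (g g' : Met n) (α β : OneForm n) : OneForm n :=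
  fun t k => covF g (mup g α) β t k - covF g' (mup g α) β t k

/-- The endomorphism T(u) = g(E) ∘ u of 1-forms, as a pointwise matrix
(`∘` being tensorial in its second argument). -/
def Tmat (g g' : Met n) (E : VF n) (t : Pt n) : Matrix (Fin n) (Fin n) ℝ :=
  Matrix.of fun k m => circM g g' (mdown g E) (fun _ => Pi.single m 1) t k

/-- The triple (g, g̃, E) is regular on `U` if T is invertible at every point. -/
def RegularTriple (U : Set (Pt n)) (g g' : Met n) (E : VF n) : Prop :=
  ∀ t ∈ U, IsUnit (Tmat g g' E t)

/-- T⁻¹(v). -/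
def TinvF (g g' : Met n) (E : VF n) (v : OneForm n) : OneForm n :=
  fun t k => ∑ m, (Tmat g g' E t)⁻¹ k m * v t m

/-- The multiplication u • v = u ∘ T⁻¹(v) on 1-forms. -/
def bulF (g g' : Met n) (E : VF n) (u v : OneForm n) : OneForm n :=
  circM g g' u (TinvF g g' E v)

/-- The multiplication • on vector fields: X • Y = g̃*((g̃X) • (g̃Y)). -/
def bulV (g g' : Met n) (E : VF n) (X Y : VF n) : VF n :=
  mup g' (bulF g g' E (mdown g' X) (mdown g' Y))

/-- The multiplication • associated to the regular triple (g, g̃, E), as a (1,2)-tensor. -/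
def bulMul (g g' : Met n) (E : VF n) : Mul2 n :=
  fun t k i j => bulV g g' E (fun _ => Pi.single i 1) (fun _ => Pi.single j 1) t k

/-- Applying a (1,2)-tensor to vector fields. -/
def mapp (c : Mul2 n) (X Y : VF n) : VF n :=
  fun t k => ∑ i, ∑ j, c t k i j * X t i * Y t j

/-- Transporting a multiplication on tangent vectors to a multiplication
on 1-forms via the metric: u • v := g̃((g̃*u) • (g̃*v)). -/
def formMul (g' : Met n) (c : Mul2 n) (u v : OneForm n) : OneForm n :=
  mdown g' (mapp c (mup g' u) (mup g' v))

/-- Lie derivative of a function. -/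
def lieFun (E : VF n) (φ : Pt n → ℝ) : Pt n → ℝ :=
  fun t => ∑ i, E t i * pder i φ t

/-- Lie derivative of a 1-form: (L_E α)(X) = E(α(X)) − α([E,X]). -/
def lieOne (E : VF n) (α : OneForm n) : OneForm n :=
  fun t k => (∑ i, E t i * pder i (fun s => α s k) t) + ∑ i, α t i * pder k (fun s => E s i) t

/-- Lie derivative of a metric: (L_E g)(X,Y) = E(g(X,Y)) − g([E,X],Y) − g(X,[E,Y]). -/
def lieMet (E : VF n) (g : Met n) : Met n := fun t =>
  Matrix.of fun k j =>
    (∑ i, E t i * pder i (fun s => g s k j) t)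
    + (∑ i, g t i j * pder k (fun s => E s i) t)
    + (∑ i, g t k i * pder j (fun s => E s i) t)

/-- Lie derivative of a multiplication ((1,2)-tensor):
(L_E c)(u,v) = L_E(c(u,v)) − c(L_E u, v) − c(u, L_E v), componentwise. -/
def lieMul (E : VF n) (c : Mul2 n) : Mul2 n :=
  fun t k i j =>
    vbr E (mapp c (fun _ => Pi.single i 1) (fun _ => Pi.single j 1)) t k
    - mapp c (vbr E (fun _ => Pi.single i 1)) (fun _ => Pi.single j 1) t k
    - mapp c (fun _ => Pi.single i 1) (vbr E (fun _ => Pi.single j 1)) t k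

/-- Lie derivative of a multiplication on 1-forms (applied to the pencil multiplication ∘). -/
def lieCirc (E : VF n) (g g' : Met n) (u v : OneForm n) : OneForm n :=
  fun t k => lieOne E (circM g g' u v) t k - circM g g' (lieOne E u) v t k
    - circM g g' u (lieOne E v) t k

/-- ∇^g_X(•)(Y,Z) := ∇^g_X(Y•Z) − (∇^g_X Y)•Z − Y•(∇^g_X Z), for a multiplication c. -/
def covMul (g : Met n) (c : Mul2 n) (X Y Z : VF n) : VF n :=
  fun t k => covV g X (mapp c Y Z) t k - mapp c (covV g X Y) Z t k
    - mapp c Y (covV g X Z) t k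

/-- The (4,0)-tensor ∇^g(•)(X,Y,Z,V) := g(∇^g_X(•)(Y,Z), V). -/
def covMul4 (g : Met n) (c : Mul2 n) (X Y Z V : VF n) (t : Pt n) : ℝ :=
  mdown2 g (covMul g c X Y Z) V t

/-- Total symmetry of the (4,0)-tensor ∇^g(•) (the F-manifold condition). -/
def TotSym (U : Set (Pt n)) (g : Met n) (c : Mul2 n) : Prop :=
  ∀ X Y Z V : VF n, SmoothVF U X → SmoothVF U Y → SmoothVF U Z → SmoothVF U V →
    ∀ t ∈ U,
      covMul4 g c X Y Z V t = covMul4 g c Y X Z V t ∧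
      covMul4 g c X Y Z V t = covMul4 g c X Z Y V t ∧
      covMul4 g c X Y Z V t = covMul4 g c X Y V Z t

/-- Weak F-manifold structure (U, •, g̃, E), with identity `e`, •-inverse `Einv` of E,
and rescaling functions `Dt` (for the metric) and `k` (for the multiplication). -/
structure IsWeakF (U : Set (Pt n)) (c : Mul2 n) (g' : Met n) (E e Einv : VF n)
    (Dt k : Pt n → ℝ) : Prop where
  met : IsMetricOn U g'
  smooth_c : SmoothMul2 U c
  smooth_E : SmoothVF U E
  smooth_e : SmoothVF U e
  smooth_Einv : SmoothVF U Einv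
  smooth_Dt : ContDiffOn ℝ (⊤ : ℕ∞) Dt U
  smooth_k : ContDiffOn ℝ (⊤ : ℕ∞) k U
  comm : ∀ t ∈ U, ∀ a i j, c t a i j = c t a j i
  assoc : ∀ t ∈ U, ∀ a x y z, (∑ m, c t a m z * c t m x y) = ∑ m, c t a x m * c t m y z
  unit : ∀ t ∈ U, ∀ a i, (∑ j, c t a j i * e t j) = if a = i then (1 : ℝ) else 0
  invar : ∀ t ∈ U, ∀ x y z, (∑ m, g' t m z * c t m x y) = ∑ m, g' t x m * c t m y z
  lie_g : ∀ t ∈ U, ∀ i j, lieMet E g' t i j = Dt t * g' t i j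
  lie_c : ∀ t ∈ U, ∀ a i j, lieMul E c t a i j = k t * c t a i j
  e_inv : ∀ t ∈ U, ∀ a, (∑ i, ∑ j, c t a i j * E t i * Einv t j) = e t a
  sym_E : ∀ Y Z V : VF n, SmoothVF U Y → SmoothVF U Z → SmoothVF U V → ∀ t ∈ U,
    covMul4 g' c E Y Z V t = covMul4 g' c Y E Z V t

/-- Weak quasi-homogeneous pencil (h, h̃) with Euler vector field E. -/
structure IsWQH (U : Set (Pt n)) (h h' : Met n) (E : VF n) (D Dt : Pt n → ℝ) : Prop where
  met_h : IsMetricOn U h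
  met_h' : IsMetricOn U h'
  compat : Compatible U h h'
  smooth_E : SmoothVF U E
  smooth_D : ContDiffOn ℝ (⊤ : ℕ∞) D U
  smooth_Dt : ContDiffOn ℝ (⊤ : ℕ∞) Dt U
  lie_h' : ∀ t ∈ U, ∀ i j, lieMet E h' t i j = Dt t * h' t i j
  cov_E : ∀ X : VF n, SmoothVF U X → ∀ t ∈ U, ∀ a, covV h X E t a = (D t / 2) * X t a
  diff_const : ∃ c₀ : ℝ, ∀ t ∈ U, Dt t - D t = c₀

/-- Frobenius manifold structure (U, •, g̃, E). -/
structure IsFrob (U : Set (Pt n)) (c : Mul2 n) (g' : Met n) (E e : VF n) (D k : ℝ) : Prop where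
  met : IsMetricOn U g'
  flat : FlatOn U g'
  smooth_c : SmoothMul2 U c
  smooth_E : SmoothVF U E
  smooth_e : SmoothVF U e
  comm : ∀ t ∈ U, ∀ a i j, c t a i j = c t a j i
  assoc : ∀ t ∈ U, ∀ a x y z, (∑ m, c t a m z * c t m x y) = ∑ m, c t a x m * c t m y z
  unit : ∀ t ∈ U, ∀ a i, (∑ j, c t a j i * e t j) = if a = i then (1 : ℝ) else 0
  invar : ∀ t ∈ U, ∀ x y z, (∑ m, g' t m z * c t m x y) = ∑ m, g' t x m * c t m y z
  e_par : ∀ X : VF n, SmoothVF U X → ∀ t ∈ U, ∀ a, covV g' X e t a = 0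
  tot_sym : TotSym U g' c
  nabla2E : ∀ X Y : VF n, SmoothVF U X → SmoothVF U Y → ∀ t ∈ U, ∀ a,
    covV g' X (covV g' Y E) t a - covV g' (covV g' X Y) E t a = 0
  lie_g : ∀ t ∈ U, ∀ i j, lieMet E g' t i j = D * g' t i j
  lie_c : ∀ t ∈ U, ∀ a i j, lieMul E c t a i j = k * c t a i j

/-- The intersection metric `g` of a Frobenius manifold: g*g̃ = E•, together with
its standard properties. -/
structure IsIntersection (U : Set (Pt n)) (c : Mul2 n) (g g' : Met n) (E : VF n)
    (d : ℝ) : Prop where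
  met : IsMetricOn U g
  defn : ∀ t ∈ U, ∀ a j, (∑ l, (g t)⁻¹ a l * g' t l j) = ∑ i, c t a i j * E t i
  lie_g : ∀ t ∈ U, ∀ i j, lieMet E g t i j = (1 - d) * g t i j
  compat : Compatible U g g'
  regular : RegularTriple U g g' E
  mul_eq : ∀ t ∈ U, ∀ a i j, bulMul g g' E t a i j = c t a i j

section PartialDerivatives

variable {f f₁ f₂ : Pt n → ℝ} {t : Pt n}

lemma pder_add (i : Fin n) (h₁ : DifferentiableAt ℝ f₁ t) (h₂ : DifferentiableAt ℝ f₂ t) :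
    pder i (fun s => f₁ s + f₂ s) t = pder i f₁ t + pder i f₂ t := by
  simp [pder, fderiv_fun_add h₁ h₂]

lemma pder_sub (i : Fin n) (h₁ : DifferentiableAt ℝ f₁ t) (h₂ : DifferentiableAt ℝ f₂ t) :
    pder i (fun s => f₁ s - f₂ s) t = pder i f₁ t - pder i f₂ t := by
  simp [pder, fderiv_fun_sub h₁ h₂]

lemma pder_mul (i : Fin n) (h₁ : DifferentiableAt ℝ f₁ t) (h₂ : DifferentiableAt ℝ f₂ t) :
    pder i (fun s => f₁ s * f₂ s) t = pder i f₁ t * f₂ t + f₁ t * pder i f₂ t := by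
  simp [pder, fderiv_fun_mul h₁ h₂]
  ring

lemma pder_const_mul (i : Fin n) (c : ℝ) (h : DifferentiableAt ℝ f t) :
    pder i (fun s => c * f s) t = c * pder i f t := by
  simp [pder, fderiv_const_mul h]

lemma pder_sum {ι : Type*} [Fintype ι] {F : ι → Pt n → ℝ} (i : Fin n)
    (h : ∀ a, DifferentiableAt ℝ (F a) t) :
    pder i (fun s => ∑ a, F a s) t = ∑ a, pder i (F a) t := by
  simp [pder, fderiv_fun_sum fun a _ => h a]

lemma pder_congr (i : Fin n) (h : f₁ =ᶠ[nhds t] f₂) : pder i f₁ t = pder i f₂ t := by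
  simp only [pder, h.fderiv_eq]

lemma contDiffAt_pder (i : Fin n) (h : ContDiffAt ℝ (⊤ : ℕ∞) f t) :
    ContDiffAt ℝ (⊤ : ℕ∞) (pder i f) t :=
  (h.fderiv_right (m := (⊤ : ℕ∞)) (by norm_cast)).clm_apply contDiffAt_const

lemma ContDiffAt.differentiableAt_of_top (h : ContDiffAt ℝ (⊤ : ℕ∞) f t) :
    DifferentiableAt ℝ f t :=
  h.differentiableAt (by simp)

lemma pder_pder_comm (i j : Fin n) (h : ContDiffAt ℝ (⊤ : ℕ∞) f t) :
    pder i (pder j f) t = pder j (pder i f) t := by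
  have hd : DifferentiableAt ℝ (fderiv ℝ f) t :=
    (h.fderiv_right (m := (⊤ : ℕ∞)) (by norm_cast)).differentiableAt (by simp)
  have key : ∀ a b : Fin n, pder a (pder b f) t
      = fderiv ℝ (fderiv ℝ f) t (Pi.single a 1) (Pi.single b 1) := fun a b => by
    change fderiv ℝ (fun s => fderiv ℝ f s (Pi.single b 1)) t _ = _
    rw [fderiv_clm_apply hd (differentiableAt_const _)]
    simp
  rw [key, key]
  exact (h.isSymmSndFDerivAt (by simp; norm_cast)).eq _ _

end PartialDerivatives

section InverseMetric

variable {g : Met n} {t : Pt n}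

lemma contDiffAt_det {m : Type*} [Fintype m] [DecidableEq m] {A : Pt n → Matrix m m ℝ}
    (h : ∀ i j, ContDiffAt ℝ (⊤ : ℕ∞) (fun s => A s i j) t) :
    ContDiffAt ℝ (⊤ : ℕ∞) (fun s => (A s).det) t := by
  simp only [Matrix.det_apply']
  exact ContDiffAt.sum fun σ _ => contDiffAt_const.mul (contDiffAt_prod fun i _ => h _ _)

lemma contDiffAt_inv_apply (h : ∀ i j, ContDiffAt ℝ (⊤ : ℕ∞) (fun s => g s i j) t)
    (hu : IsUnit (g t)) (i j : Fin n) :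
    ContDiffAt ℝ (⊤ : ℕ∞) (fun s => (g s)⁻¹ i j) t := by
  simp only [Matrix.inv_def, Matrix.smul_apply, Ring.inverse_eq_inv', smul_eq_mul,
    Matrix.adjugate_apply]
  refine ((contDiffAt_det h).inv ?_).mul (contDiffAt_det fun k l => ?_)
  · exact ((Matrix.isUnit_iff_isUnit_det _).1 hu).ne_zero
  · by_cases hk : k = j
    · subst hk
      simpa using contDiffAt_const
    · simpa [Matrix.updateRow_ne hk] using h k l

end InverseMetric

section Christoffel

variable {g : Met n} {t : Pt n}

lemma contDiffAt_chr (h : ∀ i j, ContDiffAt ℝ (⊤ : ℕ∞) (fun s => g s i j) t)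
    (hu : IsUnit (g t)) (k i j : Fin n) :
    ContDiffAt ℝ (⊤ : ℕ∞) (fun s => chr g k i j s) t := by
  have hp := fun a b c => contDiffAt_pder a (h b c)
  exact contDiffAt_const.mul (ContDiffAt.sum fun l _ =>
    (contDiffAt_inv_apply h hu k l).mul (((hp _ _ _).add (hp _ _ _)).sub (hp _ _ _)))

lemma chr_symm (hs : ∀ᶠ s in nhds t, (g s).IsSymm) (k i j : Fin n) :
    chr g k i j t = chr g k j i t := by
  have : ∀ l, pder l (fun s => g s i j) t = pder l (fun s => g s j i) t := fun l =>
    pder_congr l (hs.mono fun s hs => hs.apply j i)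
  simp only [chr, this]
  congr 1
  exact Finset.sum_congr rfl fun l _ => by ring

/-- Lowering the upper index of the Christoffel symbols. -/
lemma sum_mul_chr (hu : IsUnit (g t)) (a i j : Fin n) :
    ∑ k, g t a k * chr g k i j t = (1/2) * (pder i (fun s => g s j a) t
      + pder j (fun s => g s i a) t - pder a (fun s => g s i j) t) := by
  set v : Fin n → ℝ := fun l => pder i (fun s => g s j l) t + pder j (fun s => g s i l) t
    - pder l (fun s => g s i j) t with hv
  have h₁ : (fun k => chr g k i j t) = (1/2 : ℝ) • (g t)⁻¹.mulVec v := by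
    ext k; simp [chr, Matrix.mulVec, dotProduct, hv]
  change (g t).mulVec (fun k => chr g k i j t) a = _
  rw [h₁, Matrix.mulVec_smul, Matrix.mulVec_mulVec,
    Matrix.mul_nonsing_inv _ ((Matrix.isUnit_iff_isUnit_det _).1 hu), Matrix.one_mulVec]
  simp [hv]

end Christoffel

section SecondCovariantDerivative

variable {g : Met n} {t : Pt n} {E X Y Z : VF n}

/-- Covariant derivative along the `i`-th coordinate vector field. -/
def covCoord (g : Met n) (i : Fin n) (Z : VF n) : VF n :=
  fun t k => pder i (fun s => Z s k) t + ∑ m, chr g k i m t * Z t m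

/-- Components `R^k_{ijm}` of the curvature, `R_{∂_i,∂_j} ∂_m = ∑ k, R^k_{ijm} ∂_k`. -/
def riem (g : Met n) (k i j m : Fin n) (t : Pt n) : ℝ :=
  pder i (chr g k j m) t - pder j (chr g k i m) t
    + ∑ l, (chr g k i l t * chr g l j m t - chr g k j l t * chr g l i m t)

/-- Lie derivative of the Levi-Civita connection, in components. -/
def lieChr (E : VF n) (g : Met n) (k i j : Fin n) (t : Pt n) : ℝ :=
  pder i (pder j (fun s => E s k)) t
    + ∑ l, (E t l * pder l (chr g k i j) t - chr g l i j t * pder l (fun s => E s k) t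
      + chr g k l j t * pder i (fun s => E s l) t + chr g k i l t * pder j (fun s => E s l) t)

lemma covV_eq_sum_covCoord (g : Met n) (X Y : VF n) (t : Pt n) (k : Fin n) :
    covV g X Y t k = ∑ i, X t i * covCoord g i Y t k := rfl

lemma contDiffAt_covCoord (hΓ : ∀ k i j, ContDiffAt ℝ (⊤ : ℕ∞) (chr g k i j) t)
    (hZ : ∀ k, ContDiffAt ℝ (⊤ : ℕ∞) (fun s => Z s k) t) (i k : Fin n) :
    ContDiffAt ℝ (⊤ : ℕ∞) (fun s => covCoord g i Z s k) t :=
  (contDiffAt_pder i (hZ k)).add (ContDiffAt.sum fun m _ => (hΓ _ _ _).mul (hZ m))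

lemma covCoord_covV (hΓ : ∀ k i j, ContDiffAt ℝ (⊤ : ℕ∞) (chr g k i j) t)
    (hX : ∀ k, ContDiffAt ℝ (⊤ : ℕ∞) (fun s => X s k) t)
    (hZ : ∀ k, ContDiffAt ℝ (⊤ : ℕ∞) (fun s => Z s k) t) (j k : Fin n) :
    covCoord g j (covV g X Z) t k = ∑ i, (pder j (fun s => X s i) t * covCoord g i Z t k
      + X t i * covCoord g j (covCoord g i Z) t k) := by
  have hN := fun i k => (contDiffAt_covCoord hΓ hZ i k).differentiableAt_of_top
  have hX' := fun k => (hX k).differentiableAt_of_top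
  rw [covCoord]
  simp only [covV_eq_sum_covCoord]
  rw [pder_sum j fun i => (hX' i).fun_mul (hN i k)]
  simp only [pder_mul j (hX' _) (hN _ _), covCoord.eq_1 g j (covCoord g _ Z), mul_add,
    Finset.sum_add_distrib, Finset.mul_sum, add_assoc]
  congr 2
  rw [Finset.sum_comm]
  exact Finset.sum_congr rfl fun i _ => Finset.sum_congr rfl fun m _ => by ring

lemma covCoord_covCoord (hΓ : ∀ k i j, ContDiffAt ℝ (⊤ : ℕ∞) (chr g k i j) t)
    (hZ : ∀ k, ContDiffAt ℝ (⊤ : ℕ∞) (fun s => Z s k) t) (j i k : Fin n) :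
    covCoord g j (covCoord g i Z) t k = pder j (pder i (fun s => Z s k)) t
      + ∑ m, (pder j (chr g k i m) t * Z t m + chr g k i m t * pder j (fun s => Z s m) t)
      + ∑ l, chr g k j l t * (pder i (fun s => Z s l) t + ∑ m, chr g l i m t * Z t m) := by
  have hΓ' := fun k i j => (hΓ k i j).differentiableAt_of_top
  have hZ' := fun k => (hZ k).differentiableAt_of_top
  rw [covCoord]
  simp only [covCoord.eq_1 g i Z]
  rw [pder_add j (contDiffAt_pder i (hZ k)).differentiableAt_of_top
    (DifferentiableAt.fun_sum fun m _ => (hΓ' k i m).fun_mul (hZ' m)),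
    pder_sum j fun m => (hΓ' k i m).fun_mul (hZ' m)]
  simp only [pder_mul j (hΓ' _ _ _) (hZ' _)]

/-- The Ricci identity. -/
lemma covCoord_comm (hΓ : ∀ k i j, ContDiffAt ℝ (⊤ : ℕ∞) (chr g k i j) t)
    (hZ : ∀ k, ContDiffAt ℝ (⊤ : ℕ∞) (fun s => Z s k) t) (j i k : Fin n) :
    covCoord g j (covCoord g i Z) t k - covCoord g i (covCoord g j Z) t k
      = ∑ m, riem g k j i m t * Z t m := by
  rw [covCoord_covCoord hΓ hZ, covCoord_covCoord hΓ hZ, pder_pder_comm j i (hZ k)]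
  simp only [riem, mul_add, add_mul, sub_mul, Finset.sum_mul, Finset.sum_add_distrib,
    Finset.sum_sub_distrib, Finset.mul_sum]
  have hc : ∀ a b : Fin n, ∑ m, ∑ l, chr g k a l t * chr g l b m t * Z t m
      = ∑ l, ∑ m, chr g k a l t * (chr g l b m t * Z t m) := fun a b => by
    rw [Finset.sum_comm]
    simp only [mul_assoc]
  rw [hc, hc]
  ring

lemma covCoord_covCoord_sub (hΓ : ∀ k i j, ContDiffAt ℝ (⊤ : ℕ∞) (chr g k i j) t)
    (hsymm : ∀ k i j, chr g k i j =ᶠ[nhds t] chr g k j i)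
    (hE : ∀ k, ContDiffAt ℝ (⊤ : ℕ∞) (fun s => E s k) t) (j i k : Fin n) :
    covCoord g j (covCoord g i E) t k - ∑ m, chr g m j i t * covCoord g m E t k
      = ∑ m, riem g k j m i t * E t m + lieChr E g k j i t := by
  have hd : ∀ m, pder j (chr g k i m) t = pder j (chr g k m i) t := fun m =>
    pder_congr j (hsymm k i m)
  have hs : ∀ a b c, chr g a b c t = chr g a c b t := fun a b c => (hsymm a b c).eq_of_nhds
  rw [covCoord_covCoord hΓ hE]
  simp only [riem, lieChr, covCoord, hd, mul_add, add_mul, sub_mul, Finset.sum_mul,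
    Finset.sum_add_distrib, Finset.sum_sub_distrib, Finset.mul_sum]
  have h₁ : ∑ m, ∑ l, chr g k j l t * chr g l m i t * E t m
      = ∑ l, ∑ m, chr g k j l t * (chr g l i m t * E t m) := by
    rw [Finset.sum_comm]
    simp only [mul_assoc, hs _ i]
  have h₂ : ∑ m, ∑ l, chr g k m l t * chr g l j i t * E t m
      = ∑ l, ∑ m, chr g l j i t * (chr g k l m t * E t m) := by
    rw [Finset.sum_comm]
    refine Finset.sum_congr rfl fun l _ => Finset.sum_congr rfl fun m _ => ?_
    rw [hs k m l]; ring
  have h₃ : ∑ m, pder m (chr g k j i) t * E t m = ∑ m, E t m * pder m (chr g k j i) t :=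
    Finset.sum_congr rfl fun m _ => mul_comm _ _
  have h₄ : ∑ m, chr g k i m t * pder j (fun s => E s m) t
      = ∑ m, chr g k m i t * pder j (fun s => E s m) t := by simp only [hs k i]
  rw [h₁, h₂, h₃, h₄]
  ring

lemma curvV_eq_sum_riem (hΓ : ∀ k i j, ContDiffAt ℝ (⊤ : ℕ∞) (chr g k i j) t)
    (hX : ∀ k, ContDiffAt ℝ (⊤ : ℕ∞) (fun s => X s k) t)
    (hY : ∀ k, ContDiffAt ℝ (⊤ : ℕ∞) (fun s => Y s k) t)
    (hZ : ∀ k, ContDiffAt ℝ (⊤ : ℕ∞) (fun s => Z s k) t) (k : Fin n) :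
    curvV g X Y Z t k
      = ∑ j, ∑ i, X t j * Y t i * ∑ m, riem g k j i m t * Z t m := by
  simp only [← covCoord_comm hΓ hZ]
  rw [curvV, covV_eq_sum_covCoord, covV_eq_sum_covCoord, covV_eq_sum_covCoord]
  simp only [covCoord_covV hΓ hX hZ, covCoord_covV hΓ hY hZ, vbr, mul_sub, mul_add, sub_mul,
    Finset.mul_sum, Finset.sum_mul, Finset.sum_add_distrib, Finset.sum_sub_distrib]
  have hc : ∀ F : Fin n → Fin n → ℝ, ∑ a, ∑ b, F a b = ∑ a, ∑ b, F b a := fun F =>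
    Finset.sum_comm
  rw [hc fun i j => X t j * _ * _, hc fun i j => Y t j * _ * _,
    hc fun j i => Y t j * (X t i * _)]
  have h₁ : ∀ a b c : ℝ, a * (b * c) = a * b * c := fun a b c => by ring
  have h₂ : ∀ i j, Y t i * X t j = X t j * Y t i := fun i j => mul_comm _ _
  simp only [h₁, h₂]
  ring

lemma covV_covV_sub (hΓ : ∀ k i j, ContDiffAt ℝ (⊤ : ℕ∞) (chr g k i j) t)
    (hX : ∀ k, ContDiffAt ℝ (⊤ : ℕ∞) (fun s => X s k) t)
    (hZ : ∀ k, ContDiffAt ℝ (⊤ : ℕ∞) (fun s => Z s k) t) (k : Fin n) :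
    covV g Y (covV g X Z) t k - covV g (covV g Y X) Z t k
      = ∑ j, ∑ i, Y t j * X t i * (covCoord g j (covCoord g i Z) t k
        - ∑ m, chr g m j i t * covCoord g m Z t k) := by
  rw [covV_eq_sum_covCoord, covV_eq_sum_covCoord]
  simp only [covCoord_covV hΓ hX hZ, covV, mul_sub, mul_add, add_mul,
    Finset.mul_sum, Finset.sum_mul, Finset.sum_add_distrib, Finset.sum_sub_distrib]
  have h₁ : ∑ a, ∑ j, Y t j * pder j (fun s => X s a) t * covCoord g a Z t k
      = ∑ j, ∑ a, Y t j * (pder j (fun s => X s a) t * covCoord g a Z t k) := by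
    rw [Finset.sum_comm]
    simp only [mul_assoc]
  have h₂ : ∑ a, ∑ j, ∑ i, Y t j * (chr g a j i t * X t i) * covCoord g a Z t k
      = ∑ j, ∑ i, ∑ a, Y t j * X t i * (chr g a j i t * covCoord g a Z t k) := by
    rw [Finset.sum_comm]
    refine Finset.sum_congr rfl fun j _ => ?_
    rw [Finset.sum_comm]
    exact Finset.sum_congr rfl fun i _ => Finset.sum_congr rfl fun a _ => by ring
  rw [h₁, h₂]
  simp only [mul_assoc]
  ring

/-- `∇²E = R(·, E)· + L_E ∇`. -/
lemma covV_covV_sub_eq_curvV_add (hΓ : ∀ k i j, ContDiffAt ℝ (⊤ : ℕ∞) (chr g k i j) t)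
    (hsymm : ∀ k i j, chr g k i j =ᶠ[nhds t] chr g k j i)
    (hE : ∀ k, ContDiffAt ℝ (⊤ : ℕ∞) (fun s => E s k) t)
    (hX : ∀ k, ContDiffAt ℝ (⊤ : ℕ∞) (fun s => X s k) t)
    (hY : ∀ k, ContDiffAt ℝ (⊤ : ℕ∞) (fun s => Y s k) t) (k : Fin n) :
    covV g Y (covV g X E) t k - covV g (covV g Y X) E t k
      = curvV g Y E X t k + ∑ j, ∑ i, Y t j * X t i * lieChr E g k j i t := by
  rw [covV_covV_sub hΓ hX hE, curvV_eq_sum_riem hΓ hY hE hX]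
  simp only [covCoord_covCoord_sub hΓ hsymm hE, mul_add, Finset.sum_add_distrib, Finset.mul_sum]
  congr 1
  refine Finset.sum_congr rfl fun j _ => ?_
  rw [Finset.sum_comm]
  exact Finset.sum_congr rfl fun i _ => Finset.sum_congr rfl fun m _ => by ring

end SecondCovariantDerivative

section ConformalField

variable {g : Met n} {t : Pt n} {E : VF n} {φ : Pt n → ℝ}

/-- The derivative of the equation `L_E g = φ g`. -/
lemma pder_lieMet (hg : ∀ i j, ContDiffAt ℝ (⊤ : ℕ∞) (fun s => g s i j) t)
    (hE : ∀ k, ContDiffAt ℝ (⊤ : ℕ∞) (fun s => E s k) t)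
    (hφ : ContDiffAt ℝ (⊤ : ℕ∞) φ t)
    (hlie : ∀ᶠ s in nhds t, ∀ i j, lieMet E g s i j = φ s * g s i j) (c i j : Fin n) :
    ∑ l, ((pder c (fun s => E s l) t * pder l (fun s => g s i j) t
          + E t l * pder c (pder l (fun s => g s i j)) t)
        + (pder c (fun s => g s l j) t * pder i (fun s => E s l) t
          + g t l j * pder c (pder i (fun s => E s l)) t)
        + (pder c (fun s => g s i l) t * pder j (fun s => E s l) t
          + g t i l * pder c (pder j (fun s => E s l)) t))
      = pder c φ t * g t i j + φ t * pder c (fun s => g s i j) t := by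
  have hg' := fun i j => (hg i j).differentiableAt_of_top
  have hE' := fun k => (hE k).differentiableAt_of_top
  have hdg := fun l i j => (contDiffAt_pder l (hg i j)).differentiableAt_of_top
  have hdE := fun l k => (contDiffAt_pder l (hE k)).differentiableAt_of_top
  rw [← pder_mul c hφ.differentiableAt_of_top (hg' i j),
    ← pder_congr c (hlie.mono fun s hs => hs i j)]
  have h₁ := fun l => (hE' l).fun_mul (hdg l i j)
  have h₂ := fun l => (hg' l j).fun_mul (hdE i l)
  have h₃ := fun l => (hg' i l).fun_mul (hdE j l)
  simp only [lieMet, Matrix.of_apply, ← Finset.sum_add_distrib]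
  rw [pder_sum c fun l => ((h₁ l).fun_add (h₂ l)).fun_add (h₃ l)]
  refine Finset.sum_congr rfl fun l _ => ?_
  rw [pder_add c ((h₁ l).fun_add (h₂ l)) (h₃ l), pder_add c (h₁ l) (h₂ l),
    pder_mul c (hE' l) (hdg l i j), pder_mul c (hg' l j) (hdE i l), pder_mul c (hg' i l) (hdE j l)]

/-- Derivative of `sum_mul_chr`. -/
lemma sum_mul_pder_chr (hg : ∀ i j, ContDiffAt ℝ (⊤ : ℕ∞) (fun s => g s i j) t)
    (hu : ∀ᶠ s in nhds t, IsUnit (g s)) (l a i j : Fin n) :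
    ∑ k, g t a k * pder l (chr g k i j) t
      = (1/2) * (pder l (pder i (fun s => g s j a)) t + pder l (pder j (fun s => g s i a)) t
        - pder l (pder a (fun s => g s i j)) t)
        - ∑ k, pder l (fun s => g s a k) t * chr g k i j t := by
  have hg' := fun i j => (hg i j).differentiableAt_of_top
  have hdg := fun l i j => (contDiffAt_pder l (hg i j)).differentiableAt_of_top
  have hΓ := fun k => (contDiffAt_chr hg hu.self_of_nhds k i j).differentiableAt_of_top
  have key := pder_congr l (hu.mono fun s hs => sum_mul_chr hs a i j)
  rw [pder_sum l fun k => (hg' a k).fun_mul (hΓ k),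
    pder_const_mul l _ (((hdg i j a).fun_add (hdg j i a)).fun_sub (hdg a i j)),
    pder_sub l ((hdg i j a).fun_add (hdg j i a)) (hdg a i j),
    pder_add l (hdg i j a) (hdg j i a)] at key
  rw [← key]
  simp only [pder_mul l (hg' a _) (hΓ _), Finset.sum_add_distrib]
  ring

/-- If `L_E g = φ g` then
`g(L_E ∇ (∂_i, ∂_j), ∂_a) = (∂_i φ g_{ja} + ∂_j φ g_{ia} - ∂_a φ g_{ij}) / 2`. -/
lemma sum_mul_lieChr (hg : ∀ i j, ContDiffAt ℝ (⊤ : ℕ∞) (fun s => g s i j) t)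
    (hs : ∀ᶠ s in nhds t, (g s).IsSymm) (hu : ∀ᶠ s in nhds t, IsUnit (g s))
    (hE : ∀ k, ContDiffAt ℝ (⊤ : ℕ∞) (fun s => E s k) t)
    (hφ : ContDiffAt ℝ (⊤ : ℕ∞) φ t)
    (hlie : ∀ᶠ s in nhds t, ∀ i j, lieMet E g s i j = φ s * g s i j) (a i j : Fin n) :
    ∑ k, g t a k * lieChr E g k i j t
      = (1/2) * (pder i φ t * g t j a + pder j φ t * g t i a - pder a φ t * g t i j) := by
  have hsymm : ∀ x y, g t x y = g t y x := fun x y => hs.self_of_nhds.apply y x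
  set C : Fin n → Fin n → Fin n → ℝ := fun a i j => (1/2) * (pder i (fun s => g s j a) t
    + pder j (fun s => g s i a) t - pder a (fun s => g s i j) t) with hC
  have hlow : ∀ a i j, ∑ k, g t a k * chr g k i j t = C a i j :=
    sum_mul_chr hu.self_of_nhds
  have htransport : ∑ l, E t l * ∑ k, pder l (fun s => g s a k) t * chr g k i j t
      = φ t * C a i j - ∑ l, pder a (fun s => E s l) t * C l i j
        - ∑ k, ∑ l, g t a k * (chr g l i j t * pder l (fun s => E s k) t) := by
    have h₀ : ∑ l, E t l * ∑ k, pder l (fun s => g s a k) t * chr g k i j t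
        = ∑ k, (∑ l, E t l * pder l (fun s => g s a k) t) * chr g k i j t := by
      simp only [Finset.mul_sum, Finset.sum_mul, mul_assoc]
      exact Finset.sum_comm
    have h₁ : ∀ k, ∑ l, E t l * pder l (fun s => g s a k) t = φ t * g t a k
        - ∑ l, g t l k * pder a (fun s => E s l) t
        - ∑ l, g t a l * pder k (fun s => E s l) t := fun k => by
      have := hlie.self_of_nhds a k
      simp only [lieMet, Matrix.of_apply] at this
      linarith
    rw [h₀]
    simp only [h₁, sub_mul, Finset.sum_sub_distrib, ← hlow, Finset.mul_sum, Finset.sum_mul]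
    congr 1
    · congr 1
      · exact Finset.sum_congr rfl fun k _ => by ring
      · rw [Finset.sum_comm]
        exact Finset.sum_congr rfl fun l _ => Finset.sum_congr rfl fun k _ => by ring
    · rw [Finset.sum_comm]
      exact Finset.sum_congr rfl fun l _ => Finset.sum_congr rfl fun k _ => by ring
  have hexpand : ∑ k, g t a k * lieChr E g k i j t
      = ∑ l, (g t a l * pder i (pder j (fun s => E s l)) t
        + E t l * ((1/2) * (pder l (pder i (fun s => g s j a)) t
          + pder l (pder j (fun s => g s i a)) t - pder l (pder a (fun s => g s i j)) t))
        + pder a (fun s => E s l) t * C l i j + pder i (fun s => E s l) t * C a l j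
        + pder j (fun s => E s l) t * C a i l) - φ t * C a i j := by
    have h₁ := fun l => sum_mul_pder_chr hg hu l a i j
    have h₂ : ∑ k, g t a k * ∑ l, E t l * pder l (chr g k i j) t
        = ∑ l, E t l * ∑ k, g t a k * pder l (chr g k i j) t := by
      simp only [Finset.mul_sum]
      rw [Finset.sum_comm]
      exact Finset.sum_congr rfl fun l _ => Finset.sum_congr rfl fun k _ => by ring
    have h₃ : ∑ k, g t a k * ∑ l, chr g k l j t * pder i (fun s => E s l) t
        = ∑ l, pder i (fun s => E s l) t * C a l j := by
      simp only [Finset.mul_sum, ← hlow]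
      rw [Finset.sum_comm]
      exact Finset.sum_congr rfl fun l _ => Finset.sum_congr rfl fun k _ => by ring
    have h₄ : ∑ k, g t a k * ∑ l, chr g k i l t * pder j (fun s => E s l) t
        = ∑ l, pder j (fun s => E s l) t * C a i l := by
      simp only [Finset.mul_sum, ← hlow]
      rw [Finset.sum_comm]
      exact Finset.sum_congr rfl fun l _ => Finset.sum_congr rfl fun k _ => by ring
    simp only [lieChr, mul_add, mul_sub, Finset.sum_add_distrib, Finset.sum_sub_distrib,
      h₂, h₃, h₄, h₁, htransport]
    simp only [Finset.mul_sum]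
    ring
  have hcombine : ∑ l, (g t a l * pder i (pder j (fun s => E s l)) t
        + E t l * ((1/2) * (pder l (pder i (fun s => g s j a)) t
          + pder l (pder j (fun s => g s i a)) t - pder l (pder a (fun s => g s i j)) t))
        + pder a (fun s => E s l) t * C l i j + pder i (fun s => E s l) t * C a l j
        + pder j (fun s => E s l) t * C a i l)
      = (1/2) * ((pder i φ t * g t j a + φ t * pder i (fun s => g s j a) t)
        + (pder j φ t * g t i a + φ t * pder j (fun s => g s i a) t)
        - (pder a φ t * g t i j + φ t * pder a (fun s => g s i j) t)) := by
    rw [← pder_lieMet hg hE hφ hlie i j a, ← pder_lieMet hg hE hφ hlie j i a,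
      ← pder_lieMet hg hE hφ hlie a i j, ← Finset.sum_add_distrib, ← Finset.sum_sub_distrib,
      Finset.mul_sum]
    refine Finset.sum_congr rfl fun l _ => ?_
    rw [pder_pder_comm l i (hg j a), pder_pder_comm l j (hg i a), pder_pder_comm l a (hg i j),
      pder_pder_comm j i (hE l), pder_pder_comm a i (hE l), pder_pder_comm a j (hE l),
      hsymm a l, hsymm l j]
    simp only [hC]
    ring
  rw [hexpand, hcombine]
  simp only [hC]
  ring

end ConformalField

/-- If L_E h̃ = D̃ h̃ then
h̃((∇_Y(∇E))(X)) = h̃(R_{Y,E}X) + ½[−h̃(X,Y) dD̃ + Y(D̃) h̃(X) + X(D̃) h̃(Y)]. -/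
theorem stmt17 {n : ℕ} (U : Set (Pt n)) (hUopen : IsOpen U) (hUne : U.Nonempty)
    (h' : Met n) (hmet : IsMetricOn U h')
    (E : VF n) (hE : SmoothVF U E)
    (Dt : Pt n → ℝ) (hDt : ContDiffOn ℝ (⊤ : ℕ∞) Dt U)
    (hlie : ∀ t ∈ U, ∀ i j, lieMet E h' t i j = Dt t * h' t i j) :
    ∀ X Y : VF n, SmoothVF U X → SmoothVF U Y → ∀ t ∈ U, ∀ a,
      mdown h' (fun s m => covV h' Y (covV h' X E) s m - covV h' (covV h' Y X) E s m) t a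
        = mdown h' (curvV h' Y E X) t a
          + (1/2) * (- mdown2 h' X Y t * pder a Dt t
              + lieFun Y Dt t * mdown h' X t a
              + lieFun X Dt t * mdown h' Y t a) := by
  intro X Y hX hY t ht a
  have hU : U ∈ nhds t := hUopen.mem_nhds ht
  have hg := fun i j => (hmet.1 i j).contDiffAt hU
  have hs : ∀ᶠ s in nhds t, (h' s).IsSymm :=
    Filter.eventually_of_mem hU fun s hs => (hmet.2 s hs).1
  have hu : ∀ᶠ s in nhds t, IsUnit (h' s) :=
    Filter.eventually_of_mem hU fun s hs => (hmet.2 s hs).2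
  have hE' := fun k => (hE k).contDiffAt hU
  have hX' := fun k => (hX k).contDiffAt hU
  have hY' := fun k => (hY k).contDiffAt hU
  have hΓs : ∀ k i j, chr h' k i j =ᶠ[nhds t] chr h' k j i := fun k i j =>
    hs.eventually_nhds.mono fun s hs => chr_symm hs k i j
  have hlow : ∑ k, h' t a k * ∑ j, ∑ i, Y t j * X t i * lieChr E h' k j i t
      = ∑ j, ∑ i, Y t j * X t i * ∑ k, h' t a k * lieChr E h' k j i t := by
    simp only [Finset.mul_sum]
    rw [Finset.sum_comm]
    refine Finset.sum_congr rfl fun j _ => ?_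
    rw [Finset.sum_comm]
    exact Finset.sum_congr rfl fun i _ => Finset.sum_congr rfl fun k _ => by ring
  have hsymm : ∀ x y, h' t x y = h' t y x := fun x y => hs.self_of_nhds.apply y x
  have hlie' : ∀ᶠ s in nhds t, ∀ i j, lieMet E h' s i j = Dt s * h' s i j :=
    Filter.eventually_of_mem hU hlie
  simp only [mdown, covV_covV_sub_eq_curvV_add (contDiffAt_chr hg hu.self_of_nhds) hΓs hE' hX' hY',
    mul_add (h' t a _), Finset.sum_add_distrib, hlow,
    sum_mul_lieChr hg hs hu hE' (hDt.contDiffAt hU) hlie']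
  congr 1
  have h₁ : mdown2 h' X Y t = ∑ j, ∑ i, h' t j i * X t i * Y t j := by
    rw [mdown2, Finset.sum_comm]
    simp only [hsymm]
  have h₂ : lieFun X Dt t * ∑ j, h' t a j * Y t j
      = ∑ j, ∑ i, X t i * pder i Dt t * (h' t a j * Y t j) := by
    rw [lieFun, Finset.sum_mul_sum, Finset.sum_comm]
  rw [h₁, h₂, lieFun, Finset.sum_mul_sum]
  simp only [Finset.sum_mul, ← Finset.sum_neg_distrib]
  simp only [← Finset.sum_add_distrib, Finset.mul_sum]
  refine Finset.sum_congr rfl fun j _ => Finset.sum_congr rfl fun i _ => ?_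
  rw [hsymm i a, hsymm j a]
  ring
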